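/- arXiv:1402.2469 — 2 statements merged into one kernel-verified Lean document; each statement's English description precedes it below -/
import Mathlib

section
/- Let H be the complete s-uniform t-partite hypergraph with sides V_1, …, V_t, and let I(H) be its edge ideal in R = K[x_v : v ∈ V]. Then I(H) is unmixed (all minimal primes over I(H) have the same height) if and only if there is an integer m ≥ 1 with |V_i| = m for every i = 1, …, t, i.e., H is m-balanced. -/
open Finset

/-- The vertex set `V = V_1 ∪ ⋯ ∪ V_t` of the multipartite hypergraph with sides `Vs`. -/
def vertexSet {α : Type*} [DecidableEq α] {t : ℕ} (Vs : Fin t → Finset α) : Finset α :=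
  Finset.univ.biUnion Vs

/-- `e` is an edge of the complete `s`-uniform `t`-partite hypergraph with sides `Vs`:
`e ⊆ V`, `|e| = s`, and `|e ∩ V_i| ≤ 1` for every side. -/
def IsEdge {α : Type*} [DecidableEq α] {t : ℕ} (Vs : Fin t → Finset α) (s : ℕ)
    (e : Finset α) : Prop :=
  e ⊆ vertexSet Vs ∧ e.card = s ∧ ∀ i : Fin t, (e ∩ Vs i).card ≤ 1

/-- `F` is an independent set: a subset of `V` containing no edge. -/
def Indep {α : Type*} [DecidableEq α] {t : ℕ} (Vs : Fin t → Finset α) (s : ℕ)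
    (F : Finset α) : Prop :=
  F ⊆ vertexSet Vs ∧ ∀ e : Finset α, IsEdge Vs s e → ¬ e ⊆ F

/-- The edge ideal `I(H) = (∏_{v ∈ e} x_v : e ∈ E(H))` of the complete `s`-uniform
`t`-partite hypergraph, in the polynomial ring `K[x_v : v ∈ α]`. -/
noncomputable def edgeIdeal (K : Type*) [Field K] {α : Type*} [DecidableEq α] {t : ℕ}
    (Vs : Fin t → Finset α) (s : ℕ) : Ideal (MvPolynomial α K) :=
  Ideal.span {m : MvPolynomial α K |
    ∃ e : Finset α, IsEdge Vs s e ∧ m = ∏ v ∈ e, MvPolynomial.X v}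

/-- The height of an ideal: the infimum of the heights (in the prime spectrum, ordered
by inclusion) of the primes minimal over it. -/
noncomputable def idealHeight {R : Type*} [CommRing R] (I : Ideal R) : ℕ∞ :=
  ⨅ (p : PrimeSpectrum R) (_ : p.asIdeal ∈ I.minimalPrimes), Order.height p

/-!
A prime contains the edge ideal exactly when the vertices `v` with `x_v` in it form a vertex cover.
A set of vertices omitting a vertex from each of `s` different sides misses an edge, so a vertex
cover is a set containing at least `t - s + 1` whole sides. Hence the
minimal primes are generated by the variables of exactly `t - s + 1` sides, with height the number
of these variables. Since `1 ≤ t - s + 1 < t`, exchanging one side for another shows that these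
numbers all agree only if all sides have the same size.
-/

section VariableIdeal

open MvPolynomial

variable {σ : Type*} (R : Type*) [CommRing R]

/-- The ideal `(x_v : v ∈ S)` of `R[x_v : v ∈ σ]`. For the minimal vertex covers `S` of a
hypergraph these are the minimal primes of its edge ideal. -/
noncomputable def variableIdeal (S : Set σ) : Ideal (MvPolynomial σ R) :=
  Ideal.span (X '' S)

variable {R}

lemma variableIdeal_le_iff {S : Set σ} {J : Ideal (MvPolynomial σ R)} :
    variableIdeal R S ≤ J ↔ ∀ v ∈ S, X v ∈ J := by
  simp [variableIdeal, Ideal.span_le, Set.subset_def]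

lemma X_mem_variableIdeal [Nontrivial R] {S : Set σ} {v : σ} :
    X v ∈ variableIdeal R S ↔ v ∈ S := by
  classical
  simp [variableIdeal, mem_ideal_span_X_image, support_X, Finsupp.single_apply]

lemma variableIdeal_eq_ker_killCompl (S : Set σ) :
    variableIdeal R S =
      RingHom.ker (killCompl (R := R) (Subtype.val_injective (p := (· ∈ Sᶜ)))) := by
  refine le_antisymm (variableIdeal_le_iff.2 fun v hv => ?_) fun p hp => ?_
  · simp [RingHom.mem_ker, killCompl, hv]
  · have mk_rename_killCompl : ((Ideal.Quotient.mkₐ R (variableIdeal R S)).comp (rename (↑))).comp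
        (killCompl (Subtype.val_injective (p := (· ∈ Sᶜ)))) = Ideal.Quotient.mkₐ R _ := by
      refine algHom_ext fun v => ?_
      by_cases hv : v ∈ S
      · have hX : X v ∈ variableIdeal R S := variableIdeal_le_iff.1 le_rfl v hv
        simp [killCompl, hv, Ideal.Quotient.eq_zero_iff_mem.2 hX]
      · lift v to (Sᶜ : Set σ) using hv
        rw [AlgHom.comp_apply, AlgHom.comp_apply, ← rename_X (R := R) Subtype.val v,
          killCompl_rename_app]
    rw [← Ideal.Quotient.eq_zero_iff_mem, ← Ideal.Quotient.mkₐ_eq_mk R, ← mk_rename_killCompl]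
    simp [RingHom.mem_ker.1 hp]

instance variableIdeal_isPrime [IsDomain R] (S : Set σ) : (variableIdeal R S).IsPrime :=
  variableIdeal_eq_ker_killCompl (R := R) S ▸ RingHom.ker_isPrime _

lemma variableIdeal_le_variableIdeal_iff [Nontrivial R] {S T : Set σ} :
    variableIdeal R S ≤ variableIdeal R T ↔ S ⊆ T := by
  simp only [variableIdeal_le_iff, X_mem_variableIdeal, Set.subset_def]

lemma card_le_height_variableIdeal [IsDomain R] (S : Finset σ) :
    S.card ≤ (variableIdeal R (S : Set σ)).height := by
  classical
  induction S using Finset.induction_on with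
  | empty => simp
  | insert v S hv ih =>
    have hlt : variableIdeal R (S : Set σ) < variableIdeal R ↑(insert v S) := by
      simpa [lt_iff_le_not_ge, variableIdeal_le_variableIdeal_iff, Set.insert_subset_iff] using hv
    rw [Finset.card_insert_of_notMem hv, Nat.cast_succ]
    exact (add_le_add_left ih 1).trans (Ideal.height_add_one_le_of_lt_of_isPrime hlt)

lemma encard_le_height_variableIdeal [IsDomain R] (S : Set σ) :
    S.encard ≤ (variableIdeal R S).height := by
  refine ENat.forall_natCast_le_iff_le.1 fun n hn => ?_
  obtain ⟨T, hTS, hT⟩ := Set.exists_subset_encard_eq hn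
  lift T to Finset σ using Set.finite_of_encard_eq_coe hT
  calc (n : ℕ∞) = T.card := by rw [← hT, Set.encard_coe_eq_coe_finsetCard]
    _ ≤ (variableIdeal R (T : Set σ)).height := card_le_height_variableIdeal T
    _ ≤ (variableIdeal R S).height :=
      Ideal.height_mono (variableIdeal_le_variableIdeal_iff.2 hTS)

lemma height_variableIdeal_le_encard_of_isNoetherianRing [IsDomain R] [IsNoetherianRing R]
    [Finite σ] (S : Set σ) : (variableIdeal R S).height ≤ S.encard := by
  have hmin : variableIdeal R S ∈ (Ideal.span (X '' S)).minimalPrimes := by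
    rw [← variableIdeal, Ideal.minimalPrimes_eq_subsingleton_self, Set.mem_singleton_iff]
  calc (variableIdeal R S).height ≤ ((X '' S : Set (MvPolynomial σ R)).ncard : ℕ∞) :=
        Ideal.height_le_card_of_mem_minimalPrimes_span (S.toFinite.image X) hmin
    _ ≤ S.encard := by
        rw [(S.toFinite.image X).cast_ncard_eq]
        exact Set.encard_image_le X S

lemma C_notMem_variableIdeal {c : R} (hc : c ≠ 0) (S : Set σ) : C c ∉ variableIdeal R S := by
  classical
  simp [variableIdeal, mem_ideal_span_X_image, support_C, hc]

lemma map_variableIdeal {A : Type*} [CommRing A] (f : R →+* A) (S : Set σ) :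
    (variableIdeal R S).map (MvPolynomial.map f) = variableIdeal A S := by
  simp [variableIdeal, Ideal.map_span, Set.image_image]

attribute [local instance] algebraMvPolynomial in
lemma height_variableIdeal_fractionRing [IsDomain R] (S : Set σ) :
    (variableIdeal (FractionRing R) S).height = (variableIdeal R S).height := by
  rw [← map_variableIdeal (algebraMap R (FractionRing R))]
  refine IsLocalization.height_map_of_disjoint ((nonZeroDivisors R).map C) _ ?_
  rw [Set.disjoint_left]
  rintro _ ⟨c, hc, rfl⟩
  exact C_notMem_variableIdeal (nonZeroDivisors.ne_zero hc) S

lemma height_variableIdeal_image_equiv {τ : Type*} (e : σ ≃ τ) (S : Set σ) :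
    (variableIdeal R (e '' S)).height = (variableIdeal R S).height := by
  rw [← (renameEquiv R e).toRingEquiv.height_map (variableIdeal R S)]
  simp [variableIdeal, Ideal.map_span, Set.image_image]

lemma height_variableIdeal_range_inl (τ : Type*) :
    (variableIdeal R (Set.range (Sum.inl : σ → σ ⊕ τ))).height =
      (variableIdeal (MvPolynomial τ R) (Set.univ : Set σ)).height := by
  rw [← (sumAlgEquiv R σ τ).toRingEquiv.height_map]
  simp [variableIdeal, Ideal.map_span, ← Set.range_comp, Function.comp_def]

/- For `≤` with `S` finite, inverting the nonzero polynomials in the variables outside `S` preserves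
the height and leads to a Noetherian ring, where Krull's height theorem applies. -/
lemma height_variableIdeal [IsDomain R] (S : Set σ) :
    (variableIdeal R S).height = S.encard := by
  classical
  refine le_antisymm ?_ (encard_le_height_variableIdeal S)
  obtain hS | hS := S.finite_or_infinite
  · have : Finite S := hS
    have image_inl : Equiv.Set.sumCompl S '' Set.range Sum.inl = S := by
      simp [← Set.range_comp, Function.comp_def, Equiv.Set.sumCompl_apply_inl]
    calc (variableIdeal R S).height
        = (variableIdeal (MvPolynomial ↥Sᶜ R) (Set.univ : Set S)).height := by
          rw [← height_variableIdeal_range_inl,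
            ← height_variableIdeal_image_equiv (Equiv.Set.sumCompl S), image_inl]
      _ = (variableIdeal (FractionRing (MvPolynomial ↥Sᶜ R)) (Set.univ : Set S)).height :=
          (height_variableIdeal_fractionRing _).symm
      _ ≤ S.encard := by
          simpa using height_variableIdeal_le_encard_of_isNoetherianRing (Set.univ : Set S)
  · simp [hS.encard_eq]

lemma height_variableIdeal_biUnion [IsDomain R] [DecidableEq σ] {ι : Type*} {V : ι → Finset σ}
    {T : Finset ι} (hdisj : (T : Set ι).PairwiseDisjoint V) :
    (variableIdeal R (T.biUnion V : Set σ)).height = (∑ i ∈ T, (V i).card : ℕ) := by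
  rw [height_variableIdeal, Set.encard_coe_eq_coe_finsetCard, card_biUnion hdisj]

end VariableIdeal

lemma apply_eq_apply_of_sum_eq_sum {ι M : Type*} [Fintype ι] [AddCommMonoid M]
    [IsRightCancelAdd M] {f : ι → M} {k : ℕ} (hk : 0 < k) (hkι : k < Fintype.card ι)
    (h : ∀ S T : Finset ι, S.card = k → T.card = k → ∑ i ∈ S, f i = ∑ i ∈ T, f i) (i j : ι) :
    f i = f j := by
  classical
  obtain rfl | hij := eq_or_ne i j
  · rfl
  have hcard : k - 1 ≤ ({i, j}ᶜ : Finset ι).card := by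
    rw [card_compl, card_pair hij]
    omega
  obtain ⟨U, hU, hUk⟩ := exists_subset_card_eq hcard
  have hi : i ∉ U := fun hi => by simpa using hU hi
  have hj : j ∉ U := fun hj => by simpa using hU hj
  have hsum := h (insert i U) (insert j U)
    (by rw [card_insert_of_notMem hi]; omega) (by rw [card_insert_of_notMem hj]; omega)
  rw [sum_insert hi, sum_insert hj] at hsum
  exact add_right_cancel hsum

lemma subset_of_biUnion_subset_biUnion {ι α : Type*} [DecidableEq α] {V : ι → Finset α}
    (hdisj : Pairwise (Function.onFun Disjoint V)) {T U : Finset ι}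
    (hne : ∀ i ∈ T, (V i).Nonempty) (h : T.biUnion V ⊆ U.biUnion V) : T ⊆ U := by
  intro i hi
  obtain ⟨v, hv⟩ := hne i hi
  obtain ⟨j, hj, hvj⟩ := mem_biUnion.1 (h (mem_biUnion.2 ⟨i, hi, hv⟩))
  rwa [hdisj.eq (not_disjoint_iff.2 ⟨v, hv, hvj⟩)]

section VertexCover

variable {α : Type*} [DecidableEq α] {t s : ℕ} {Vs : Fin t → Finset α}

/-- `S` is a vertex cover of the complete `s`-uniform `t`-partite hypergraph with sides `Vs`: it
meets every edge. -/
def IsVertexCover (Vs : Fin t → Finset α) (s : ℕ) (S : Set α) : Prop :=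
  ∀ e, IsEdge Vs s e → ∃ v ∈ e, v ∈ S

lemma IsEdge.card_add_le_of_disjoint_biUnion {e : Finset α} (he : IsEdge Vs s e)
    {T : Finset (Fin t)} (heT : Disjoint e (T.biUnion Vs)) : T.card + s ≤ t := by
  obtain ⟨hV, rfl, hone⟩ := he
  have exists_side : ∀ v ∈ e, ∃ i ∈ Tᶜ, v ∈ e ∩ Vs i := by
    intro v hv
    obtain ⟨i, -, hvi⟩ := mem_biUnion.1 (hV hv)
    refine ⟨i, mem_compl.2 fun hi => ?_, mem_inter.2 ⟨hv, hvi⟩⟩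
    exact disjoint_left.1 heT hv (mem_biUnion.2 ⟨i, hi, hvi⟩)
  have hcard : e.card ≤ Tᶜ.card :=
    calc e.card ≤ (Tᶜ.biUnion fun i => e ∩ Vs i).card :=
          card_le_card fun v hv => mem_biUnion.2 (exists_side v hv)
      _ ≤ Tᶜ.card * 1 := card_biUnion_le_card_mul _ _ _ fun i _ => hone i
      _ = Tᶜ.card := mul_one _
  have hT := card_add_card_compl T
  rw [Fintype.card_fin] at hT
  omega

lemma isEdge_image (hdisj : Pairwise (Function.onFun Disjoint Vs)) {A : Finset (Fin t)}
    {f : A → α} (hf : ∀ i : A, f i ∈ Vs i) : IsEdge Vs A.card (univ.image f) := by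
  have eq_of_mem : ∀ (i : A) (j : Fin t), f i ∈ Vs j → ↑i = j := fun i j hj =>
    hdisj.eq (not_disjoint_iff.2 ⟨f i, hf i, hj⟩)
  have hinj : Function.Injective f := fun i j hij => Subtype.ext (eq_of_mem i j (hij ▸ hf j))
  refine ⟨fun v hv => ?_, ?_, fun j => card_le_one.2 fun v hv w hw => ?_⟩
  · obtain ⟨i, -, rfl⟩ := mem_image.1 hv
    exact mem_biUnion.2 ⟨i, mem_univ _, hf i⟩
  · rw [card_image_of_injective _ hinj, card_univ, Fintype.card_coe]
  · simp only [mem_inter, mem_image, mem_univ, true_and] at hv hw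
    obtain ⟨⟨i, rfl⟩, hij⟩ := hv
    obtain ⟨⟨k, rfl⟩, hkj⟩ := hw
    exact congrArg f (Subtype.ext ((eq_of_mem i j hij).trans (eq_of_mem k j hkj).symm))

lemma IsVertexCover.card_sides_not_subset_lt {S : Set α} (hS : IsVertexCover Vs s S)
    (hdisj : Pairwise (Function.onFun Disjoint Vs)) {A : Finset (Fin t)}
    (hA : ∀ i ∈ A, ¬ (Vs i : Set α) ⊆ S) : A.card < s := by
  by_contra! hs
  obtain ⟨B, hBA, rfl⟩ := exists_subset_card_eq hs
  have exists_vertex : ∀ i : B, ∃ v ∈ Vs i, v ∉ S := fun i => Set.not_subset.1 (hA i (hBA i.2))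
  choose f hf hfS using exists_vertex
  obtain ⟨v, hv, hvS⟩ := hS _ (isEdge_image hdisj hf)
  obtain ⟨i, -, rfl⟩ := mem_image.1 hv
  exact hfS i hvS

lemma IsVertexCover.exists_biUnion_subset {S : Set α} (hS : IsVertexCover Vs s S)
    (hst : s ≤ t + 1) (hdisj : Pairwise (Function.onFun Disjoint Vs)) :
    ∃ T : Finset (Fin t), T.card + s = t + 1 ∧ (T.biUnion Vs : Set α) ⊆ S := by
  classical
  let A : Finset (Fin t) := {i | (Vs i : Set α) ⊆ S}
  have hcompl : Aᶜ.card < s := hS.card_sides_not_subset_lt hdisj (by simp [A])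
  have hA : t + 1 - s ≤ A.card := by
    have := card_add_card_compl A
    rw [Fintype.card_fin] at this
    omega
  obtain ⟨T, hTA, hT⟩ := exists_subset_card_eq hA
  have hTS : ∀ i ∈ T, (Vs i : Set α) ⊆ S := fun i hi => by simpa [A] using hTA hi
  exact ⟨T, by omega, by simpa using hTS⟩

lemma isVertexCover_iff (hst : s ≤ t + 1) (hdisj : Pairwise (Function.onFun Disjoint Vs))
    {S : Set α} :
    IsVertexCover Vs s S ↔
      ∃ T : Finset (Fin t), T.card + s = t + 1 ∧ (T.biUnion Vs : Set α) ⊆ S := by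
  refine ⟨fun hS => hS.exists_biUnion_subset hst hdisj, fun ⟨T, hT, hTS⟩ e he => ?_⟩
  have hnot : ¬ Disjoint e (T.biUnion Vs) := fun h => by
    have := he.card_add_le_of_disjoint_biUnion h
    omega
  obtain ⟨v, hve, hvT⟩ := not_disjoint_iff.1 hnot
  exact ⟨v, hve, hTS hvT⟩

end VertexCover

section EdgeIdeal

open MvPolynomial

variable {K : Type*} [Field K] {α : Type*} [DecidableEq α] {t s : ℕ} {Vs : Fin t → Finset α}

lemma edgeIdeal_le_iff_isVertexCover {P : Ideal (MvPolynomial α K)} [P.IsPrime] :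
    edgeIdeal K Vs s ≤ P ↔ IsVertexCover Vs s {v | X v ∈ P} := by
  simp only [edgeIdeal, IsVertexCover, Set.mem_ofPred_eq, ← Ideal.IsPrime.prod_mem_iff,
    Ideal.span_le]
  exact ⟨fun h e he => h ⟨e, he, rfl⟩, fun h p ⟨e, he, hp⟩ => hp ▸ h e he⟩

lemma edgeIdeal_le_iff_exists (hst : s ≤ t + 1)
    (hdisj : Pairwise (Function.onFun Disjoint Vs)) {P : Ideal (MvPolynomial α K)} [P.IsPrime] :
    edgeIdeal K Vs s ≤ P ↔
      ∃ T : Finset (Fin t), T.card + s = t + 1 ∧ variableIdeal K (T.biUnion Vs : Set α) ≤ P := by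
  simp only [edgeIdeal_le_iff_isVertexCover, isVertexCover_iff hst hdisj, variableIdeal_le_iff,
    Set.subset_def, Set.mem_ofPred_eq]

lemma minimalPrimes_edgeIdeal (hst : s ≤ t + 1) (hdisj : Pairwise (Function.onFun Disjoint Vs))
    (hne : ∀ i, (Vs i).Nonempty) :
    (edgeIdeal K Vs s).minimalPrimes =
      {P | ∃ T : Finset (Fin t), T.card + s = t + 1 ∧
        variableIdeal K (T.biUnion Vs : Set α) = P} := by
  ext P
  constructor
  · rintro ⟨⟨hP, hle⟩, hmin⟩
    obtain ⟨T, hT, hTP⟩ := (edgeIdeal_le_iff_exists hst hdisj).1 hle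
    have hcover : edgeIdeal K Vs s ≤ variableIdeal K (T.biUnion Vs : Set α) :=
      (edgeIdeal_le_iff_exists hst hdisj).2 ⟨T, hT, le_rfl⟩
    exact ⟨T, hT, le_antisymm hTP (hmin ⟨inferInstance, hcover⟩ hTP)⟩
  · rintro ⟨T, hT, rfl⟩
    refine ⟨⟨inferInstance, (edgeIdeal_le_iff_exists hst hdisj).2 ⟨T, hT, le_rfl⟩⟩, ?_⟩
    rintro Q ⟨hQ, hle⟩ hQT
    obtain ⟨U, hU, hUQ⟩ := (edgeIdeal_le_iff_exists hst hdisj).1 hle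
    have hUT : U ⊆ T := subset_of_biUnion_subset_biUnion hdisj (fun i _ => hne i)
      (coe_subset.1 (variableIdeal_le_variableIdeal_iff.1 (hUQ.trans hQT)))
    rwa [← eq_of_subset_of_card_le hUT (by omega)]

lemma unmixed_iff_sum_eq_sum (hst : s ≤ t + 1) (hdisj : Pairwise (Function.onFun Disjoint Vs))
    (hne : ∀ i, (Vs i).Nonempty) :
    (∀ p q : PrimeSpectrum (MvPolynomial α K),
        p.asIdeal ∈ (edgeIdeal K Vs s).minimalPrimes →
        q.asIdeal ∈ (edgeIdeal K Vs s).minimalPrimes →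
        Order.height p = Order.height q) ↔
      ∀ T U : Finset (Fin t), T.card + s = t + 1 → U.card + s = t + 1 →
        ∑ i ∈ T, (Vs i).card = ∑ i ∈ U, (Vs i).card := by
  have height_eq (T : Finset (Fin t)) :
      (variableIdeal K (T.biUnion Vs : Set α)).height = (∑ i ∈ T, (Vs i).card : ℕ) :=
    height_variableIdeal_biUnion (hdisj.set_pairwise _)
  rw [minimalPrimes_edgeIdeal hst hdisj hne]
  simp only [← PrimeSpectrum.height_eq_orderHeight]
  constructor
  · intro h T U hT hU
    have := h ⟨_, variableIdeal_isPrime (T.biUnion Vs : Set α)⟩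
      ⟨_, variableIdeal_isPrime (U.biUnion Vs : Set α)⟩ ⟨T, hT, rfl⟩ ⟨U, hU, rfl⟩
    simpa only [height_eq, Nat.cast_inj] using this
  · rintro h p q ⟨T, hT, hp⟩ ⟨U, hU, hq⟩
    rw [← hp, ← hq, height_eq, height_eq, h T U hT hU]

end EdgeIdeal

theorem unmixed_iff_balanced_general
    (K : Type*) [Field K] {α : Type*} [DecidableEq α] {t s : ℕ}
    (hs : 2 ≤ s) (hst : s ≤ t)
    (Vs : Fin t → Finset α)
    (hdisj : ∀ i j : Fin t, i ≠ j → Disjoint (Vs i) (Vs j))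
    (hne : ∀ i : Fin t, (Vs i).Nonempty) :
    (∀ p q : PrimeSpectrum (MvPolynomial α K),
        p.asIdeal ∈ (edgeIdeal K Vs s).minimalPrimes →
        q.asIdeal ∈ (edgeIdeal K Vs s).minimalPrimes →
        Order.height p = Order.height q) ↔
      ∃ m : ℕ, 1 ≤ m ∧ ∀ i : Fin t, (Vs i).card = m := by
  rw [unmixed_iff_sum_eq_sum (by omega) hdisj hne]
  constructor
  · intro h
    have card_eq : ∀ i j, (Vs i).card = (Vs j).card :=
      apply_eq_apply_of_sum_eq_sum (k := t + 1 - s) (by omega) (by rw [Fintype.card_fin]; omega)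
        fun T U hT hU => h T U (by omega) (by omega)
    exact ⟨(Vs ⟨0, by omega⟩).card, (hne _).card_pos, fun i => card_eq i _⟩
  · rintro ⟨m, -, hm⟩ T U hT hU
    simp only [hm, sum_const, show T.card = U.card by omega]

/-- The edge ideal of the complete `s`-uniform `t`-partite hypergraph
is unmixed (all primes minimal over it have the same height) if and only if the
hypergraph is `m`-balanced for some `m ≥ 1`. -/
theorem unmixed_iff_balanced
    (K : Type*) [Field K] {α : Type*} [DecidableEq α] [Fintype α] {t s : ℕ}
    (hs : 2 ≤ s) (hst : s ≤ t)
    (Vs : Fin t → Finset α)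
    (hdisj : ∀ i j : Fin t, i ≠ j → Disjoint (Vs i) (Vs j))
    (hne : ∀ i : Fin t, (Vs i).Nonempty)
    (huniv : vertexSet Vs = Finset.univ) :
    (∀ p q : PrimeSpectrum (MvPolynomial α K),
        p.asIdeal ∈ (edgeIdeal K Vs s).minimalPrimes →
        q.asIdeal ∈ (edgeIdeal K Vs s).minimalPrimes →
        Order.height p = Order.height q) ↔
      ∃ m : ℕ, 1 ≤ m ∧ ∀ i : Fin t, (Vs i).card = m :=
  unmixed_iff_balanced_general K hs hst Vs hdisj hne
end

section
/- Let H be the complete s-uniform t-partite hypergraph with sides V_1, …, V_t, and let I(H) be its edge ideal in R = K[x_v : v ∈ V]. Then the minimal number of generators of I(H) (the least cardinality of a generating set) equals the height of I(H) if and only if s = t and |V_i| = 1 for every i, i.e., if and only if H has exactly one edge. -/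
open Finset

/-- The minimal number of generators of an ideal: the least cardinality of a (finite)
generating set. -/
noncomputable def minNumGens {R : Type*} [CommRing R] (I : Ideal R) : ℕ :=
  sInf {n : ℕ | ∃ G : Finset R, G.card = n ∧ Ideal.span (G : Set R) = I}

/-!
The coefficients at the exponents of an antichain of monomials map the ideal they generate onto a
free module, so no generating set is smaller than the antichain; in particular, the minimal number
of generators of the edge ideal is the number of edges. Its height is at most the size of any vertex cover. If two distinct edges share a
vertex, that vertex together with one vertex from each remaining edge is a cover smaller than the
number of edges; so for a complete intersection the edges are pairwise disjoint. Exchanging a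
vertex of an edge for a vertex outside it produces a second edge that meets the first as soon as
`2 ≤ s`, hence disjointness forces `V` itself to be an edge, and then the only one.
-/

open MvPolynomial

section Invariants

variable {R : Type*} [CommRing R] (I : Ideal R)

lemma idealHeight_eq_height : idealHeight I = I.height := by
  rw [Ideal.height_eq_inf_minimalPrimes, idealHeight]
  refine le_antisymm (le_iInf₂ fun p hp => ?_) (le_iInf₂ fun p hp => ?_)
  · exact (iInf₂_le ⟨p, hp.1.1⟩ hp).trans_eq (PrimeSpectrum.height_eq_orderHeight ⟨p, hp.1.1⟩).symm
  · exact (iInf₂_le p.asIdeal hp).trans_eq p.height_eq_orderHeight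

lemma minNumGens_eq_spanFinrank : minNumGens I = I.spanFinrank := by
  rw [Submodule.spanFinrank_eq_iInf, minNumGens, iInf]
  congr 1
  ext n
  simp only [Set.mem_ofPred_eq, Set.mem_range, Subtype.exists, exists_prop]
  exact exists_congr fun G => and_comm

end Invariants

section MonomialIdeals

variable {σ R : Type*} [CommRing R]

variable (R) in
/-- The monomial ideal of `R[x_i : i ∈ σ]` generated by the monomials with exponents in `D`. -/
noncomputable abbrev monomialIdeal (D : Set (σ →₀ ℕ)) : Ideal (MvPolynomial σ R) :=
  Ideal.span ((fun d => monomial d 1) '' D)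

lemma coeff_mul_of_mem_monomialIdeal {D : Set (σ →₀ ℕ)} (hD : IsAntichain (· ≤ ·) D)
    {d : σ →₀ ℕ} (hd : d ∈ D) (a : MvPolynomial σ R) {f : MvPolynomial σ R}
    (hf : f ∈ monomialIdeal R D) :
    coeff d (a * f) = constantCoeff a * coeff d f := by
  classical
  rw [coeff_mul, constantCoeff_eq]
  refine sum_eq_single_of_mem (0, d) (by simp) ?_
  rintro ⟨u, w⟩ huw hne
  have huw : u + w = d := HasAntidiagonal.mem_antidiagonal.1 huw
  contrapose! hne
  obtain ⟨d', hd', hd'w⟩ :=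
    mem_ideal_span_monomial_image.1 hf w (mem_support_iff.2 (right_ne_zero_of_mul hne))
  have hwd : w ≤ d := huw ▸ le_add_self
  obtain rfl : d' = d := hD.eq hd' hd (hd'w.trans hwd)
  obtain rfl : w = d' := hwd.antisymm hd'w
  rw [add_eq_right.1 huw]

/-- The coefficients at the generators, on the monomial ideal `I` of an antichain `D` of exponents.
It is encoded as a map that is semilinear along `constantCoeff`, with kernel `(x_i : i ∈ σ) • I`,
so that generators of `I` are sent to generators of the free module `D → R`. -/
noncomputable def generatorCoeffs {D : Set (σ →₀ ℕ)} (hD : IsAntichain (· ≤ ·) D) :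
    monomialIdeal R D →ₛₗ[(constantCoeff : MvPolynomial σ R →+* R)] (D → R) where
  toFun f d := coeff d f.1
  map_add' f g := by ext d; exact coeff_add ..
  map_smul' a f := by ext d; exact coeff_mul_of_mem_monomialIdeal hD d.2 a f.2

instance ringHomSurjective_constantCoeff :
    RingHomSurjective (constantCoeff : MvPolynomial σ R →+* R) :=
  ⟨fun r => ⟨C r, constantCoeff_C σ r⟩⟩

lemma range_generatorCoeffs {D : Set (σ →₀ ℕ)} [Finite D] (hD : IsAntichain (· ≤ ·) D) :
    LinearMap.range (generatorCoeffs (R := R) hD) = ⊤ := by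
  classical
  rw [eq_top_iff, ← (Pi.basisFun R D).span_eq, Submodule.span_le]
  rintro _ ⟨d, rfl⟩
  refine ⟨⟨monomial d.1 1, Ideal.subset_span ⟨d, d.2, rfl⟩⟩, ?_⟩
  ext d'
  simp [generatorCoeffs, coeff_monomial, Pi.single_apply, Subtype.ext_iff, eq_comm]

theorem spanFinrank_monomialIdeal [Nontrivial R] {D : Set (σ →₀ ℕ)} (hfin : D.Finite)
    (hD : IsAntichain (· ≤ ·) D) : (monomialIdeal R D).spanFinrank = D.ncard := by
  have := hfin.fintype
  have hfg : (⊤ : Submodule (MvPolynomial σ R) (monomialIdeal R D)).FG :=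
    (Submodule.fg_top _).2 (Submodule.fg_span (hfin.image _))
  refine le_antisymm ?_ ?_
  · exact (Submodule.spanFinrank_span_le_ncard_of_finite (hfin.image _)).trans
      (Set.ncard_image_le hfin)
  · calc D.ncard = (⊤ : Submodule R (D → R)).spanFinrank := by
          rw [← Module.finrank_eq_spanFinrank_of_free, Module.finrank_fintype_fun_eq_card,
            ← Nat.card_eq_fintype_card, Nat.card_coe_set_eq]
      _ = (Submodule.map (generatorCoeffs hD) ⊤).spanFinrank := by
          rw [← LinearMap.range_eq_map, range_generatorCoeffs]
      _ ≤ (⊤ : Submodule (MvPolynomial σ R) (monomialIdeal R D)).spanFinrank :=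
          Submodule.spanFinrank_map_le_of_fg _ hfg
      _ = (monomialIdeal R D).spanFinrank := Submodule.spanFinrank_top _

end MonomialIdeals

section VariableIdeals

variable {σ R : Type*} [CommRing R]

lemma idealOfVars_eq_ker_constantCoeff : idealOfVars σ R = RingHom.ker constantCoeff := by
  ext f
  rw [← pow_one (idealOfVars σ R), mem_pow_idealOfVars_iff', RingHom.mem_ker, constantCoeff_eq]
  simp [Finsupp.degree_eq_zero_iff]

variable [IsDomain R]

lemma isPrime_idealOfVars : (idealOfVars σ R).IsPrime := by
  rw [idealOfVars_eq_ker_constantCoeff]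
  exact RingHom.ker_isPrime _

lemma disjoint_map_C_nonZeroDivisors_idealOfVars :
    Disjoint ((nonZeroDivisors R).map (C (σ := σ)) : Set (MvPolynomial σ R))
      (idealOfVars σ R) := by
  rw [idealOfVars_eq_ker_constantCoeff, Set.disjoint_left]
  rintro _ ⟨r, hr, rfl⟩ hker
  exact nonZeroDivisors.ne_zero hr (by simpa using hker)

-- Inverting the nonzero constants leaves the height of this prime unchanged and makes the ring
-- Noetherian, so that Krull's height theorem applies.
lemma height_idealOfVars_le [Finite σ] : (idealOfVars σ R).height ≤ Nat.card σ := by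
  let F := FractionRing R
  let _ : Algebra (MvPolynomial σ R) (MvPolynomial σ F) := algebraMvPolynomial
  have := isPrime_idealOfVars (σ := σ) (R := R)
  have hmap : (idealOfVars σ R).map (algebraMap _ (MvPolynomial σ F)) = idealOfVars σ F := by
    rw [Ideal.map_span, ← Set.range_comp]
    exact congrArg (fun f => Ideal.span (Set.range f)) (funext fun v => map_X (algebraMap R F) v)
  calc (idealOfVars σ R).height = (idealOfVars σ F).height := by
        rw [← hmap, IsLocalization.height_map_of_disjoint ((nonZeroDivisors R).map C) _
          disjoint_map_C_nonZeroDivisors_idealOfVars]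
    _ ≤ (idealOfVars σ F).spanFinrank := Ideal.height_le_spanFinrank _ isPrime_idealOfVars.ne_top
    _ ≤ (Set.range (X : σ → MvPolynomial σ F)).encard := Submodule.spanFinrank_span_le_encard _
    _ ≤ Nat.card σ := by
        rw [← Set.image_univ, ← ENat.card_eq_coe_natCard, ← Set.encard_univ]
        exact Set.encard_image_le _ _

lemma height_span_X_image_le (C : Finset σ) :
    (Ideal.span (X '' (C : Set σ) : Set (MvPolynomial σ R))).height ≤ #C := by
  classical
  let φ : MvPolynomial σ R ≃+* MvPolynomial (C : Set σ) (MvPolynomial ((C : Set σ)ᶜ : Set σ) R) :=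
    ((renameEquiv R (Equiv.Set.sumCompl (C : Set σ)).symm).trans
      (sumAlgEquiv R (C : Set σ) ((C : Set σ)ᶜ : Set σ))).toRingEquiv
  have hφ : (Ideal.span (X '' (C : Set σ))).map φ = idealOfVars (C : Set σ) _ := by
    rw [Ideal.map_span, ← Set.image_comp, Set.image_eq_range]
    refine congrArg (fun f => Ideal.span (Set.range f)) (funext fun v => ?_)
    simp [φ, Equiv.Set.sumCompl_symm_apply_of_mem v.2]
  rw [← φ.height_map, hφ]
  exact height_idealOfVars_le.trans_eq (by simp)

end VariableIdeals

section SquarefreeIdeals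

variable {α R : Type*} [CommRing R]

variable (R) in
/-- The squarefree monomial ideal `(∏_{v ∈ e} x_v : e ∈ E)`, i.e. the edge ideal over `R` of an
arbitrary finite hypergraph with edge set `E`. -/
noncomputable def squarefreeIdeal (E : Finset (Finset α)) : Ideal (MvPolynomial α R) :=
  Ideal.span ((fun e => ∏ v ∈ e, X v) '' (E : Set (Finset α)))

/-- The exponent vector of the squarefree monomial `∏_{v ∈ e} x_v`, which makes squarefree ideals
instances of `monomialIdeal`. -/
noncomputable def squarefreeExponent (e : Finset α) : α →₀ ℕ := ∑ v ∈ e, Finsupp.single v 1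

lemma squarefreeExponent_le_squarefreeExponent_iff {e f : Finset α} :
    squarefreeExponent e ≤ squarefreeExponent f ↔ e ⊆ f := by
  classical
  simp only [squarefreeExponent, Finsupp.le_def, Finsupp.coe_finsetSum, Finset.sum_apply,
    Finsupp.single_apply, sum_ite_eq']
  refine forall_congr' fun v => ?_
  split_ifs <;> simp_all

lemma squarefreeExponent_injective :
    Function.Injective (squarefreeExponent : Finset α → α →₀ ℕ) := fun _ _ h =>
  (squarefreeExponent_le_squarefreeExponent_iff.1 h.le).antisymm
    (squarefreeExponent_le_squarefreeExponent_iff.1 h.ge)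

lemma squarefreeIdeal_eq_monomialIdeal (E : Finset (Finset α)) :
    squarefreeIdeal R E = monomialIdeal R (squarefreeExponent '' E) := by
  simp only [squarefreeIdeal, monomialIdeal, Set.image_image, squarefreeExponent,
    monomial_sum_one]
  rfl

theorem minNumGens_squarefreeIdeal [Nontrivial R] {E : Finset (Finset α)}
    (hE : IsAntichain (· ⊆ ·) (E : Set (Finset α))) :
    minNumGens (squarefreeIdeal R E) = #E := by
  have hanti : IsAntichain (· ≤ ·) (squarefreeExponent '' (E : Set (Finset α))) :=
    hE.image _ fun _ _ => squarefreeExponent_le_squarefreeExponent_iff.1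
  rw [minNumGens_eq_spanFinrank, squarefreeIdeal_eq_monomialIdeal,
    spanFinrank_monomialIdeal (E.finite_toSet.image _) hanti,
    Set.ncard_image_of_injective _ squarefreeExponent_injective, Set.ncard_coe_finset]

lemma height_squarefreeIdeal_le [IsDomain R] {E : Finset (Finset α)} {C : Finset α}
    (hC : ∀ e ∈ E, ¬Disjoint e C) : (squarefreeIdeal R E).height ≤ #C := by
  refine (Ideal.height_mono (Ideal.span_le.2 ?_)).trans (height_span_X_image_le C)
  rintro _ ⟨e, he, rfl⟩
  obtain ⟨v, hve, hvC⟩ := not_disjoint_iff.1 (hC e he)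
  exact Ideal.mem_of_dvd _ (dvd_prod_of_mem X hve) (Ideal.subset_span ⟨v, hvC, rfl⟩)

lemma height_squarefreeIdeal_singleton [IsDomain R] {e : Finset α} (he : e.Nonempty) :
    (squarefreeIdeal R {e}).height = 1 := by
  obtain ⟨v, hv⟩ := he
  refine le_antisymm ((height_squarefreeIdeal_le (C := {v}) (by simpa using hv)).trans_eq
    (by simp)) (Order.one_le_iff_ne_zero.2 fun h => ?_)
  have hbot := Ideal.height_eq_zero_iff_eq_bot.1 h
  have hmem : ∏ v ∈ e, X v ∈ squarefreeIdeal R {e} :=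
    Ideal.subset_span ⟨e, mem_singleton_self e, rfl⟩
  rw [hbot, Ideal.mem_bot] at hmem
  exact prod_ne_zero_iff.2 (fun v _ => X_ne_zero v) hmem

lemma exists_cover_card_lt {E : Finset (Finset α)} (hE : ∅ ∉ E) {e f : Finset α} (he : e ∈ E)
    (hf : f ∈ E) (hne : e ≠ f) (hmeet : ¬Disjoint e f) :
    ∃ C : Finset α, (∀ g ∈ E, ¬Disjoint g C) ∧ #C < #E := by
  classical
  obtain ⟨v, hve, hvf⟩ := not_disjoint_iff.1 hmeet
  have hnonempty (g) (hg : g ∈ E) : ∃ w, w ∈ g :=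
    nonempty_iff_ne_empty.2 (ne_of_mem_of_not_mem hg hE)
  have : Nonempty α := ⟨v⟩
  choose! p hp using hnonempty
  refine ⟨insert v (((E.erase e).erase f).image p), fun g hg => not_disjoint_iff.2 ?_, ?_⟩
  · by_cases hge : g = e
    · exact ⟨v, hge ▸ hve, mem_insert_self ..⟩
    by_cases hgf : g = f
    · exact ⟨v, hgf ▸ hvf, mem_insert_self ..⟩
    exact ⟨p g, hp g hg, mem_insert_of_mem
      (mem_image_of_mem p (mem_erase.2 ⟨hgf, mem_erase.2 ⟨hge, hg⟩⟩))⟩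
  · have hfe : f ∈ E.erase e := mem_erase.2 ⟨hne.symm, hf⟩
    calc #(insert v (((E.erase e).erase f).image p))
        ≤ #((E.erase e).erase f) + 1 := (card_insert_le ..).trans (by gcongr; exact card_image_le)
      _ = #(E.erase e) := card_erase_add_one hfe
      _ < #E := card_erase_lt_of_mem he

theorem pairwiseDisjoint_of_minNumGens_eq_height [IsDomain R] {E : Finset (Finset α)}
    (hE : IsAntichain (· ⊆ ·) (E : Set (Finset α)))
    (hCI : (minNumGens (squarefreeIdeal R E) : ℕ∞) = (squarefreeIdeal R E).height) :
    (E : Set (Finset α)).PairwiseDisjoint id := by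
  intro e he f hf hne
  by_contra hmeet
  have hempty : ∅ ∉ E := fun h =>
    hne ((hE.eq h he (empty_subset e)).symm.trans (hE.eq h hf (empty_subset f)))
  obtain ⟨C, hC, hlt⟩ := exists_cover_card_lt hempty he hf hne hmeet
  rw [minNumGens_squarefreeIdeal hE] at hCI
  exact hlt.not_ge (by exact_mod_cast hCI.trans_le (height_squarefreeIdeal_le hC))

end SquarefreeIdeals

section Multipartite

variable {α : Type*} [DecidableEq α] {t s : ℕ} {Vs : Fin t → Finset α} {e : Finset α} {b : α}

open Classical in
/-- The edge set `E(H)` of the complete `s`-uniform `t`-partite hypergraph with sides `Vs`. -/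
noncomputable def multipartiteEdges (Vs : Fin t → Finset α) (s : ℕ) : Finset (Finset α) :=
  {e ∈ (vertexSet Vs).powerset | IsEdge Vs s e}

lemma mem_multipartiteEdges : e ∈ multipartiteEdges Vs s ↔ IsEdge Vs s e := by
  simp only [multipartiteEdges, mem_filter, mem_powerset, and_iff_right_iff_imp]
  exact And.left

lemma isAntichain_multipartiteEdges :
    IsAntichain (· ⊆ ·) (multipartiteEdges Vs s : Set (Finset α)) :=
  Set.Sized.isAntichain fun _ he => (mem_multipartiteEdges.1 he).2.1

lemma edgeIdeal_eq_squarefreeIdeal (K : Type*) [Field K] :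
    edgeIdeal K Vs s = squarefreeIdeal K (multipartiteEdges Vs s) := by
  simp only [edgeIdeal, squarefreeIdeal, Set.image, mem_coe, mem_multipartiteEdges, eq_comm]

lemma multipartiteEdges_eq_singleton (hV : IsEdge Vs s (vertexSet Vs)) :
    multipartiteEdges Vs s = {vertexSet Vs} := by
  refine eq_singleton_iff_unique_mem.2 ⟨mem_multipartiteEdges.2 hV, fun e he => ?_⟩
  have he := mem_multipartiteEdges.1 he
  exact eq_of_subset_of_card_le he.1 (hV.2.1.trans he.2.1.symm).le

variable (hdisj : Pairwise (Function.onFun Disjoint Vs))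

include hdisj

lemma exists_isEdge (hne : ∀ i, (Vs i).Nonempty) (hst : s ≤ t) : ∃ e, IsEdge Vs s e := by
  choose r hr using hne
  have hinj : Function.Injective r := fun i j hij =>
    hdisj.eq (not_disjoint_iff.2 ⟨r i, hr i, hij ▸ hr j⟩)
  obtain ⟨T, -, hT⟩ := exists_subset_card_eq (s := (univ : Finset (Fin t))) (by simpa using hst)
  refine ⟨T.image r, ?_, by rw [card_image_of_injective T hinj, hT], fun i => ?_⟩
  · exact image_subset_iff.2 fun i _ => mem_biUnion.2 ⟨i, mem_univ i, hr i⟩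
  · have hsub : T.image r ∩ Vs i ⊆ {r i} := fun v hv => by
      obtain ⟨hvT, hvi⟩ := mem_inter.1 hv
      obtain ⟨j, -, rfl⟩ := mem_image.1 hvT
      obtain rfl := hdisj.eq (not_disjoint_iff.2 ⟨r j, hr j, hvi⟩)
      exact mem_singleton_self _
    exact card_le_card hsub

lemma IsEdge.exists_exchange (he : IsEdge Vs s e) (hne : e.Nonempty) (hb : b ∈ vertexSet Vs)
    (hbe : b ∉ e) : ∃ a ∈ e, IsEdge Vs s (insert b (e.erase a)) := by
  obtain ⟨j, -, hbj⟩ := mem_biUnion.1 hb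
  obtain ⟨a, ha, haj⟩ : ∃ a ∈ e, e ∩ Vs j ⊆ {a} := by
    obtain hempty | ⟨a, ha⟩ := (e ∩ Vs j).eq_empty_or_nonempty
    · exact ⟨_, hne.choose_spec, hempty ▸ empty_subset _⟩
    · exact ⟨a, mem_of_mem_inter_left ha, fun v hv =>
        mem_singleton.2 (card_le_one.1 (he.2.2 j) v hv a ha)⟩
  refine ⟨a, ha, ?_, ?_, fun i => ?_⟩
  · exact insert_subset hb ((erase_subset a e).trans he.1)
  · rw [card_insert_of_notMem (fun h => hbe (mem_of_mem_erase h)), card_erase_add_one ha, he.2.1]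
  · by_cases hbi : b ∈ Vs i
    · obtain rfl := hdisj.eq (not_disjoint_iff.2 ⟨b, hbi, hbj⟩)
      have herase : e.erase a ∩ Vs i = ∅ := by
        rw [erase_inter, erase_eq_empty_iff]
        exact subset_singleton_iff.1 haj
      simp [insert_inter_of_mem hbi, herase]
    · rw [insert_inter_of_notMem hbi]
      exact (card_le_card (inter_subset_inter_right (erase_subset a e))).trans (he.2.2 i)

lemma IsEdge.eq_vertexSet (hs : 2 ≤ s) (he : IsEdge Vs s e)
    (hpair : (multipartiteEdges Vs s : Set (Finset α)).PairwiseDisjoint id) : e = vertexSet Vs := by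
  refine he.1.antisymm fun b hb => ?_
  by_contra hbe
  have hcard : 1 < #e := he.2.1 ▸ hs
  obtain ⟨a, -, hf⟩ := he.exists_exchange hdisj (card_pos.1 (by lia)) hb hbe
  obtain ⟨c, hc, hca⟩ := exists_mem_ne hcard a
  have hne : e ≠ insert b (e.erase a) := fun h => hbe (h ▸ mem_insert_self ..)
  exact disjoint_left.1 (hpair (mem_multipartiteEdges.2 he) (mem_multipartiteEdges.2 hf) hne) hc
    (mem_insert_of_mem (mem_erase.2 ⟨hca, hc⟩))

lemma isEdge_vertexSet_iff (hne : ∀ i, (Vs i).Nonempty) :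
    IsEdge Vs s (vertexSet Vs) ↔ s = t ∧ ∀ i, #(Vs i) = 1 := by
  have hcard : #(vertexSet Vs) = ∑ i, #(Vs i) := card_biUnion fun _ _ _ _ hij => hdisj hij
  have hside (i : Fin t) : vertexSet Vs ∩ Vs i = Vs i :=
    inter_eq_right.2 (subset_biUnion_of_mem Vs (mem_univ i))
  simp only [IsEdge, Subset.refl, true_and, hside, hcard]
  constructor
  · rintro ⟨rfl, hle⟩
    have hone (i : Fin t) : #(Vs i) = 1 := (hle i).antisymm (card_pos.2 (hne i))
    exact ⟨by simp [hone], hone⟩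
  · rintro ⟨rfl, hone⟩
    exact ⟨by simp [hone], fun i => (hone i).le⟩

theorem minNumGens_eq_idealHeight_iff_isEdge_vertexSet (K : Type*) [Field K] (hs : 2 ≤ s)
    (hst : s ≤ t) (hne : ∀ i, (Vs i).Nonempty) :
    (minNumGens (edgeIdeal K Vs s) : ℕ∞) = idealHeight (edgeIdeal K Vs s) ↔
      IsEdge Vs s (vertexSet Vs) := by
  rw [edgeIdeal_eq_squarefreeIdeal, idealHeight_eq_height]
  constructor
  · intro hCI
    obtain ⟨e, he⟩ := exists_isEdge hdisj hne hst
    have hpair := pairwiseDisjoint_of_minNumGens_eq_height isAntichain_multipartiteEdges hCI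
    exact he.eq_vertexSet hdisj hs hpair ▸ he
  · intro hV
    have hVne : (vertexSet Vs).Nonempty := card_pos.1 (by rw [hV.2.1]; lia)
    rw [minNumGens_squarefreeIdeal isAntichain_multipartiteEdges,
      multipartiteEdges_eq_singleton hV, card_singleton, height_squarefreeIdeal_singleton hVne,
      Nat.cast_one]

end Multipartite

theorem complete_intersection_iff_one_edge_general
    (K : Type*) [Field K] {α : Type*} [DecidableEq α] {t s : ℕ}
    (hs : 2 ≤ s) (hst : s ≤ t)
    (Vs : Fin t → Finset α)
    (hdisj : ∀ i j : Fin t, i ≠ j → Disjoint (Vs i) (Vs j))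
    (hne : ∀ i : Fin t, (Vs i).Nonempty) :
    (minNumGens (edgeIdeal K Vs s) : ℕ∞) = idealHeight (edgeIdeal K Vs s) ↔
      s = t ∧ ∀ i : Fin t, (Vs i).card = 1 :=
  (minNumGens_eq_idealHeight_iff_isEdge_vertexSet (fun i j => hdisj i j) K hs hst hne).trans
    (isEdge_vertexSet_iff (fun i j => hdisj i j) hne)

/-- The minimal number of generators of the edge ideal of the
complete `s`-uniform `t`-partite hypergraph equals its height (i.e. the edge ideal is
a complete intersection) if and only if `s = t` and every side is a singleton, i.e.
the hypergraph has exactly one edge. -/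
theorem complete_intersection_iff_one_edge
    (K : Type*) [Field K] {α : Type*} [DecidableEq α] [Fintype α] {t s : ℕ}
    (hs : 2 ≤ s) (hst : s ≤ t)
    (Vs : Fin t → Finset α)
    (hdisj : ∀ i j : Fin t, i ≠ j → Disjoint (Vs i) (Vs j))
    (hne : ∀ i : Fin t, (Vs i).Nonempty)
    (huniv : vertexSet Vs = Finset.univ) :
    (minNumGens (edgeIdeal K Vs s) : ℕ∞) = idealHeight (edgeIdeal K Vs s) ↔
      s = t ∧ ∀ i : Fin t, (Vs i).card = 1 :=
  complete_intersection_iff_one_edge_general K hs hst Vs hdisj hne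
end
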